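/- Let (Ω, F, P) be a probability space, Z an integrable real random variable, s ≥ 0 and w ∈ ℝ, and let z̄ ∈ ℝ be the unique real number with E[h(s, Z − E[Z] + z̄)] = w. Then (z̄ − E[Z])⁻ = inf{ x ≥ 0 : E[h(s, Z − x)] ≤ w }, where a⁻ = max(−a, 0). -/

import Mathlib

open MeasureTheory Filter Set Function Topology

noncomputable section

/-- A function with values in a topological space is càdlàg on `[0,∞)`:
right-continuous at every `t ≥ 0` and admitting a left limit at every `t > 0`. -/
def CadlagOn {E : Type*} [TopologicalSpace E] (f : ℝ → E) : Prop :=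
  (∀ t : ℝ, 0 ≤ t → ContinuousWithinAt f (Set.Ici t) t) ∧
  ∀ t : ℝ, 0 < t → ∃ L : E, Filter.Tendsto f (nhdsWithin t (Set.Iio t)) (nhds L)

/-- Condition (H) on `h : [0,∞) × ℝ → ℝ` with constants `Mh, Lh, ch, Ch`. -/
structure CondH (h : ℝ → ℝ → ℝ) (Mh Lh ch Ch : ℝ) : Prop where
  meas : Measurable (Function.uncurry h)
  Mh_pos : 0 < Mh
  Lh_pos : 0 < Lh
  ch_pos : 0 < ch
  Ch_pos : 0 < Ch
  growth : ∀ t x : ℝ, 0 ≤ t → |h t x| ≤ Mh * (1 + |x|)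
  strict_mono : ∀ t : ℝ, 0 ≤ t → StrictMono (h t)
  lip_time : ∀ s t x : ℝ, 0 ≤ s → 0 ≤ t → |h t x - h s x| ≤ Lh * |t - s|
  lip_lower : ∀ t x y : ℝ, 0 ≤ t → ch * |x - y| ≤ |h t x - h t y|
  lip_upper : ∀ t x y : ℝ, 0 ≤ t → |h t x - h t y| ≤ Ch * |x - y|

/-- A process with càdlàg paths, integrable values, and values uniformly integrable
on every compact time interval. -/
structure NiceProcess {Ω : Type*} [MeasurableSpace Ω] (μ : Measure Ω) (Y : ℝ → Ω → ℝ) : Prop where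
  cadlag : ∀ ω, CadlagOn fun t => Y t ω
  integrable : ∀ t : ℝ, 0 ≤ t → Integrable (Y t) μ
  unifInt : ∀ q : ℝ, 0 ≤ q → UniformIntegrable (fun t : Set.Icc (0:ℝ) q => Y t.1) 1 μ

/-- Solution of the Skorokhod problem with mean minimality condition and two constraints
associated with `(h, Y, l, u)`. -/
def MeanSP {Ω : Type*} [MeasurableSpace Ω] (μ : Measure Ω) (h : ℝ → ℝ → ℝ)
    (Y : ℝ → Ω → ℝ) (l u : ℝ → ℝ) (X : ℝ → Ω → ℝ) (k : ℝ → ℝ) : Prop :=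
  (∀ ω, CadlagOn fun t => X t ω) ∧ CadlagOn k ∧ k 0 = 0 ∧
  (∀ t : ℝ, 0 ≤ t → ∀ ω, X t ω = Y t ω + k t) ∧
  (∀ t : ℝ, 0 ≤ t → (∫ ω, h t (X t ω) ∂μ) ∈ Set.Icc (l t) (u t)) ∧
  (∀ t q : ℝ, 0 ≤ t → t ≤ q →
    ((∀ s : ℝ, t < s → s ≤ q → (∫ ω, h s (X s ω) ∂μ) < u s) → 0 ≤ k q - k t) ∧
    ((∀ s : ℝ, t < s → s ≤ q → l s < ∫ ω, h s (X s ω) ∂μ) → k q - k t ≤ 0)) ∧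
  ∀ t : ℝ, 0 < t →
    ((∫ ω, h t (X t ω) ∂μ) < u t → 0 ≤ k t - Function.leftLim k t) ∧
    (l t < ∫ ω, h t (X t ω) ∂μ → k t - Function.leftLim k t ≤ 0)

/-- Solution of the deterministic Skorokhod problem with two time-dependent barriers. -/
def DetSP (y lb ub x k : ℝ → ℝ) : Prop :=
  CadlagOn x ∧ CadlagOn k ∧ k 0 = 0 ∧
  (∀ t : ℝ, 0 ≤ t → x t = y t + k t ∧ x t ∈ Set.Icc (lb t) (ub t)) ∧
  (∀ t q : ℝ, 0 ≤ t → t ≤ q →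
    ((∀ s : ℝ, t < s → s ≤ q → x s < ub s) → 0 ≤ k q - k t) ∧
    ((∀ s : ℝ, t < s → s ≤ q → lb s < x s) → k q - k t ≤ 0)) ∧
  ∀ t : ℝ, 0 < t →
    (x t < ub t → 0 ≤ k t - Function.leftLim k t) ∧
    (lb t < x t → k t - Function.leftLim k t ≤ 0)

/-- Solution of the Skorokhod problem with mean minimality condition and a single
lower barrier `l`.  The minimality condition `∫ (E[h(s,X_s)] - l_s) dk_s = 0` is expressed
through any measure `ν` that agrees with the Lebesgue–Stieltjes measure of `k` on `[0,∞)`. -/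
def MeanSPLower {Ω : Type*} [MeasurableSpace Ω] (μ : Measure Ω) (h : ℝ → ℝ → ℝ)
    (Y : ℝ → Ω → ℝ) (l : ℝ → ℝ) (X : ℝ → Ω → ℝ) (k : ℝ → ℝ) : Prop :=
  (∀ ω, CadlagOn fun t => X t ω) ∧ CadlagOn k ∧ k 0 = 0 ∧
  (∀ t : ℝ, 0 ≤ t → ∀ ω, X t ω = Y t ω + k t) ∧
  (∀ t : ℝ, 0 ≤ t → l t ≤ ∫ ω, h t (X t ω) ∂μ) ∧
  MonotoneOn k (Set.Ici 0) ∧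
  ∀ ν : Measure ℝ,
    (∀ a b : ℝ, 0 ≤ a → a ≤ b → ν (Set.Ioc a b) = ENNReal.ofReal (k b - k a)) →
    ν {0} = 0 →
    ∀ t : ℝ, 0 ≤ t → (∫ s in Set.Icc 0 t, ((∫ ω, h s (X s ω) ∂μ) - l s) ∂ν) = 0

/-- Solution of the Skorokhod problem with mean minimality condition and a single
upper barrier `u`.  The minimality condition `∫ (u_s - E[h(s,X_s)]) d(-k)_s = 0` is expressed
through any measure `ν` that agrees with the Lebesgue–Stieltjes measure of `-k` on `[0,∞)`. -/
def MeanSPUpper {Ω : Type*} [MeasurableSpace Ω] (μ : Measure Ω) (h : ℝ → ℝ → ℝ)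
    (Y : ℝ → Ω → ℝ) (u : ℝ → ℝ) (X : ℝ → Ω → ℝ) (k : ℝ → ℝ) : Prop :=
  (∀ ω, CadlagOn fun t => X t ω) ∧ CadlagOn k ∧ k 0 = 0 ∧
  (∀ t : ℝ, 0 ≤ t → ∀ ω, X t ω = Y t ω + k t) ∧
  (∀ t : ℝ, 0 ≤ t → (∫ ω, h t (X t ω) ∂μ) ≤ u t) ∧
  AntitoneOn k (Set.Ici 0) ∧
  ∀ ν : Measure ℝ,
    (∀ a b : ℝ, 0 ≤ a → a ≤ b → ν (Set.Ioc a b) = ENNReal.ofReal (k a - k b)) →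
    ν {0} = 0 →
    ∀ t : ℝ, 0 ≤ t → (∫ s in Set.Icc 0 t, (u s - ∫ ω, h s (X s ω) ∂μ) ∂ν) = 0

/-- `OscN x η q` is the number of `η`-oscillations of `x` on `[0,q]`: the largest `m`
for which there are `0 ≤ t₁ ≤ t₂ ≤ ⋯ ≤ t_{2m} ≤ q` with `|x(t_{2i}) - x(t_{2i-1})| > η`. -/
def OscN (x : ℝ → ℝ) (η q : ℝ) : ℕ :=
  sSup {m : ℕ | ∃ a b : Fin m → ℝ,
    (∀ i, 0 ≤ a i ∧ a i ≤ b i ∧ b i ≤ q) ∧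
    (∀ i j, i < j → b i ≤ a j) ∧
    ∀ i, η < |x (b i) - x (a i)|}

/-- The left limit at `t` of a càdlàg function on `[0,∞)`, with the convention
`x(0-) = x(0)`. -/
def leftLimAt {E : Type*} [TopologicalSpace E] (x : ℝ → E) (t : ℝ) : E :=
  if t = 0 then x 0 else Function.leftLim x t

/-- Convergence `xₙ → x` in the Skorokhod `J₁` topology on `D([0,∞), E)`, expressed via
the sequence characterization used in the paper. -/
def DConvOn {E : Type*} [TopologicalSpace E] (xs : ℕ → ℝ → E) (x : ℝ → E) : Prop :=
  ∀ t : ℝ, 0 ≤ t → ∃ tn : ℕ → ℝ,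
    (∀ n, 0 ≤ tn n) ∧ Filter.Tendsto tn Filter.atTop (nhds t) ∧
    ∀ t' t'' : ℕ → ℝ, (∀ n, 0 ≤ t' n) → (∀ n, 0 ≤ t'' n) →
      Filter.Tendsto t' Filter.atTop (nhds t) → Filter.Tendsto t'' Filter.atTop (nhds t) →
      (∀ n, t' n < tn n ∧ tn n ≤ t'' n) →
      Filter.Tendsto (fun n => xs n (t' n)) Filter.atTop (nhds (leftLimAt x t)) ∧
      Filter.Tendsto (fun n => xs n (t'' n)) Filter.atTop (nhds (x t))

/-!
The function `x ↦ E[h(s, Z - x)]` is strictly decreasing, being an average of strictly decreasing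
functions, and it takes the value `w` at `x = E[Z] - z̄`. Hence `{x ≥ 0 | E[h(s, Z - x)] ≤ w}` is
the half-line starting at `max (E[Z] - z̄) 0`.
-/

theorem setOfPred_le_and_apply_le_eq_Ici_max {α β : Type*} [LinearOrder α] [Preorder β] {g : α → β}
    (hg : StrictAnti g) (a b : α) : {x | b ≤ x ∧ g x ≤ g a} = Ici (max a b) := by
  ext x
  simp only [mem_ofPred_eq, mem_Ici, max_le_iff, hg.le_iff_ge, and_comm]

section Integral

variable {Ω : Type*} [MeasurableSpace Ω] {μ : Measure Ω}

theorem integral_lt_integral_of_ae_lt [NeZero μ] {f g : Ω → ℝ} (hf : Integrable f μ)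
    (hg : Integrable g μ) (hlt : ∀ᵐ ω ∂μ, f ω < g ω) : ∫ ω, f ω ∂μ < ∫ ω, g ω ∂μ := by
  have hle : f ≤ᵐ[μ] g := hlt.mono fun _ => le_of_lt
  refine (integral_mono_ae hf hg hle).lt_of_ne fun heq => ?_
  have hfg : f =ᵐ[μ] g := (integral_eq_iff_of_ae_le hf hg hle).1 heq
  obtain ⟨ω, hω_lt, hω_eq⟩ := (hlt.and hfg).exists
  exact hω_lt.ne hω_eq

theorem strictAnti_integral_comp_sub [NeZero μ] {G : Type*} [AddGroup G] [Preorder G]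
    [AddLeftStrictMono G] [AddRightStrictMono G] {f : G → ℝ} (hf : StrictMono f) {Z : Ω → G}
    (hint : ∀ x, Integrable (fun ω => f (Z ω - x)) μ) :
    StrictAnti fun x => ∫ ω, f (Z ω - x) ∂μ := fun x y hxy =>
  integral_lt_integral_of_ae_lt (hint y) (hint x) <|
    .of_forall fun ω => hf (sub_lt_sub_left hxy (Z ω))

theorem integrable_comp_of_norm_le_linear [IsFiniteMeasure μ] {E F : Type*}
    [NormedAddCommGroup E] [NormedAddCommGroup F] {f : E → F} {M : ℝ}
    (hgrowth : ∀ x, ‖f x‖ ≤ M * (1 + ‖x‖)) {Z : Ω → E} (hZ : Integrable Z μ)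
    (hmeas : AEStronglyMeasurable (fun ω => f (Z ω)) μ) : Integrable (fun ω => f (Z ω)) μ :=
  (((integrable_const 1).add hZ.norm).const_mul M).mono' hmeas <|
    .of_forall fun ω => hgrowth (Z ω)

theorem CondH.integrable_comp_sub [IsFiniteMeasure μ] {h : ℝ → ℝ → ℝ} {Mh Lh ch Ch : ℝ}
    (hH : CondH h Mh Lh ch Ch) {s : ℝ} (hs : 0 ≤ s) {Z : Ω → ℝ} (hZ : Integrable Z μ) (x : ℝ) :
    Integrable (fun ω => h s (Z ω - x)) μ := by
  have hZx : Integrable (fun ω => Z ω - x) μ := hZ.sub (integrable_const x)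
  have hmeas : Measurable (h s) := hH.meas.of_uncurry_left
  exact integrable_comp_of_norm_le_linear (fun y => hH.growth s y hs) hZx
    (hmeas.comp_aemeasurable hZx.aemeasurable).aestronglyMeasurable

theorem stmt_15_general [NeZero μ] {f : ℝ → ℝ} (hf : StrictMono f) {Z : Ω → ℝ}
    (hint : ∀ x, Integrable (fun ω => f (Z ω - x)) μ) {m zbar w : ℝ}
    (hzbar : ∫ ω, f (Z ω - m + zbar) ∂μ = w) :
    max (-(zbar - m)) 0 = sInf {x : ℝ | 0 ≤ x ∧ ∫ ω, f (Z ω - x) ∂μ ≤ w} := by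
  have hw : ∫ ω, f (Z ω - (m - zbar)) ∂μ = w := by simpa only [sub_add] using hzbar
  rw [← hw, setOfPred_le_and_apply_le_eq_Ici_max (strictAnti_integral_comp_sub hf hint),
    csInf_Ici, neg_sub]

end Integral

/-- `(z̄ - E Z)⁻ = inf{ x ≥ 0 : E[h(s, Z - x)] ≤ w }`. -/
theorem stmt_15 {Ω : Type*} [MeasurableSpace Ω] (μ : Measure Ω) [IsProbabilityMeasure μ]
    (h : ℝ → ℝ → ℝ) (Mh Lh ch Ch : ℝ) (hH : CondH h Mh Lh ch Ch)
    (Z : Ω → ℝ) (hZ : Integrable Z μ) (s : ℝ) (hs : 0 ≤ s) (w : ℝ) (zbar : ℝ)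
    (hzbar : (∫ ω, h s (Z ω - (∫ ω', Z ω' ∂μ) + zbar) ∂μ) = w) :
    max (-(zbar - ∫ ω, Z ω ∂μ)) 0 =
      sInf {x : ℝ | 0 ≤ x ∧ (∫ ω, h s (Z ω - x) ∂μ) ≤ w} :=
  stmt_15_general (hH.strict_mono s hs) (hH.integrable_comp_sub hs hZ) hzbar
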